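/- arXiv:2508.05885 — 2 statements merged into one kernel-verified Lean document; each statement's English description precedes it below -/
import Mathlib

section
/- Let 𝔫 be a 2-step nilpotent Lie algebra with dim 𝔷 = 2. Then any complex structure J on 𝔫 is 2-step, i.e., J𝔫'⊆𝔷. -/
variable {L : Type*} [LieRing L] [LieAlgebra ℝ L]

/-- A complex structure on a real Lie algebra: `J² = -1` and vanishing Nijenhuis tensor. -/
def IsComplexStructure (J : L →ₗ[ℝ] L) : Prop :=
  (∀ x : L, J (J x) = -x) ∧
    ∀ x y : L, ⁅x, y⁆ + J (⁅J x, y⁆ + ⁅x, J y⁆) - ⁅J x, J y⁆ = 0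

/-- Right bracket by `y`, as a linear map `x ↦ ⁅x, y⁆`. -/
def bracketRight (y : L) : L →ₗ[ℝ] L where
  toFun x := ⁅x, y⁆
  map_add' a b := add_lie a b y
  map_smul' r a := smul_lie r a y

/-- The ascending series `𝔞_ℓ(J)` associated to a complex structure `J`. -/
def aSeries (J : L →ₗ[ℝ] L) : ℕ → Submodule ℝ L
  | 0 => ⊥
  | n + 1 =>
    (⨅ y : L, (aSeries J n).comap (bracketRight y)) ⊓
      (⨅ y : L, (aSeries J n).comap ((bracketRight y).comp J))

/-- The commutator ideal `𝔫' = [𝔫,𝔫]`. -/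
def commutatorIdeal (L : Type*) [LieRing L] [LieAlgebra ℝ L] : LieIdeal ℝ L :=
  ⁅(⊤ : LieIdeal ℝ L), (⊤ : LieIdeal ℝ L)⁆

/-!
If `w` is central, the Nijenhuis identity at `(y, w)` reads `J ⁅y, J w⁆ = ⁅J y, J w⁆`. So if some
`J w` with `w` central is not itself central, say `⁅y, J w⁆ ≠ 0`, then `⁅y, J w⁆` is a nonzero
central vector whose image under `J` is again central. These two vectors are linearly independent
because `-1` is not a square, hence they span the two-dimensional center, which is therefore
`J`-invariant after all.
-/

section LinearAlgebra

variable {K V : Type*} [Field K] [AddCommGroup V] [Module K V] {J : V →ₗ[K] V}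

theorem linearIndependent_pair_apply_of_apply_apply_eq_neg (hK : ¬ IsSquare (-1 : K))
    (hJ : ∀ x, J (J x) = -x) {v : V} (hv : v ≠ 0) : LinearIndependent K ![v, J v] := by
  refine (LinearIndependent.pair_iff' hv).2 fun c hc => hK ⟨c, ?_⟩
  refine smul_left_injective K hv ?_
  calc (-1 : K) • v = J (J v) := by rw [hJ, neg_one_smul]
    _ = (c * c) • v := by rw [← hc, map_smul, ← hc, smul_smul]

theorem map_span_pair_apply_le_of_apply_apply_eq_neg (hJ : ∀ x, J (J x) = -x) (v : V) :
    (Submodule.span K {v, J v}).map J ≤ Submodule.span K {v, J v} := by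
  rw [Submodule.map_span_le]
  rintro _ (rfl | rfl)
  · exact Submodule.mem_span_of_mem (Set.mem_insert_of_mem _ rfl)
  · rw [hJ]
    exact neg_mem (Submodule.mem_span_of_mem (Set.mem_insert _ _))

theorem map_le_of_finrank_eq_two_of_mem_of_apply_mem (hK : ¬ IsSquare (-1 : K))
    (hJ : ∀ x, J (J x) = -x) {S : Submodule K V} (hS : Module.finrank K S = 2)
    {v : V} (hv : v ≠ 0) (hvS : v ∈ S) (hJvS : J v ∈ S) : S.map J ≤ S := by
  have : FiniteDimensional K S := .of_finrank_eq_succ hS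
  have span_le : Submodule.span K {v, J v} ≤ S := Submodule.span_le.2 (Set.pair_subset hvS hJvS)
  have finrank_span : Module.finrank K (Submodule.span K {v, J v}) = 2 := by
    rw [← Matrix.range_cons_cons_empty v (J v) ![]]
    exact finrank_span_eq_card (linearIndependent_pair_apply_of_apply_apply_eq_neg hK hJ hv)
  have span_eq : Submodule.span K {v, J v} = S :=
    Submodule.eq_of_le_of_finrank_eq span_le (finrank_span.trans hS.symm)
  exact span_eq ▸ map_span_pair_apply_le_of_apply_apply_eq_neg hJ v

end LinearAlgebra

theorem apply_lie_apply_eq_lie_of_mem_center {R 𝔤 : Type*} [CommRing R] [LieRing 𝔤]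
    [LieAlgebra R 𝔤] {J : 𝔤 →ₗ[R] 𝔤}
    (hN : ∀ x y : 𝔤, ⁅x, y⁆ + J (⁅J x, y⁆ + ⁅x, J y⁆) - ⁅J x, J y⁆ = 0)
    {w : 𝔤} (hw : w ∈ LieAlgebra.center R 𝔤) (y : 𝔤) : J ⁅y, J w⁆ = ⁅J y, J w⁆ := by
  have lie_w (x : 𝔤) : ⁅x, w⁆ = 0 := (LieModule.mem_maxTrivSubmodule R 𝔤 𝔤 w).1 hw x
  simpa only [lie_w, zero_add, sub_eq_zero] using hN y w

theorem complex_structure_is_two_step_of_finrank_center_eq_two_general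
    {K 𝔤 : Type*} [Field K] [LieRing 𝔤] [LieAlgebra K 𝔤] (hK : ¬ IsSquare (-1 : K))
    (h2 : ⁅(⊤ : LieIdeal K 𝔤), (⊤ : LieIdeal K 𝔤)⁆ ≤ LieAlgebra.center K 𝔤)
    (hz : Module.finrank K (LieAlgebra.center K 𝔤) = 2)
    (J : 𝔤 →ₗ[K] 𝔤) (hJ : ∀ x, J (J x) = -x)
    (hN : ∀ x y : 𝔤, ⁅x, y⁆ + J (⁅J x, y⁆ + ⁅x, J y⁆) - ⁅J x, J y⁆ = 0) :
    Submodule.map J (LieAlgebra.center K 𝔤 : Submodule K 𝔤) ≤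
      (LieAlgebra.center K 𝔤 : Submodule K 𝔤) := by
  have lie_mem_center (x y : 𝔤) : ⁅x, y⁆ ∈ LieAlgebra.center K 𝔤 :=
    h2 (LieSubmodule.lie_mem_lie (LieSubmodule.mem_top x) (LieSubmodule.mem_top y))
  by_contra not_invariant
  obtain ⟨w, hw, hJw⟩ : ∃ w ∈ LieAlgebra.center K 𝔤, J w ∉ LieAlgebra.center K 𝔤 := by
    simpa [Submodule.map_le_iff_le_comap, SetLike.not_le_iff_exists] using not_invariant
  obtain ⟨y, lie_ne_zero⟩ : ∃ y, ⁅y, J w⁆ ≠ 0 := by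
    simpa [LieModule.mem_maxTrivSubmodule] using hJw
  have apply_lie_mem_center : J ⁅y, J w⁆ ∈ LieAlgebra.center K 𝔤 :=
    apply_lie_apply_eq_lie_of_mem_center hN hw y ▸ lie_mem_center (J y) (J w)
  exact not_invariant (map_le_of_finrank_eq_two_of_mem_of_apply_mem hK hJ hz lie_ne_zero
    (lie_mem_center y (J w)) apply_lie_mem_center)

/-- on a 2-step nilpotent Lie algebra with 2-dimensional center, every
complex structure is 2-step: `J𝔫' ⊆ 𝔷`. -/
theorem complex_structure_is_two_step_of_finrank_center_eq_two
    [FiniteDimensional ℝ L]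
    (h2 : commutatorIdeal L ≤ LieAlgebra.center ℝ L)
    (hna : commutatorIdeal L ≠ ⊥)
    (hz : Module.finrank ℝ (LieAlgebra.center ℝ L) = 2)
    (J : L →ₗ[ℝ] L) (hJ : IsComplexStructure J) :
    Submodule.map J (commutatorIdeal L : Submodule ℝ L) ≤
      (LieAlgebra.center ℝ L : Submodule ℝ L) :=
  (Submodule.map_mono h2).trans
    (complex_structure_is_two_step_of_finrank_center_eq_two_general
      (fun h => by linarith [h.nonneg]) h2 hz J hJ.1 hJ.2)
end

section
/- Let 𝔫 be a 2-step nilpotent Lie algebra admitting a 3-step complex structure. Then dim 𝔫' ≥ 3. -/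
variable {L : Type*} [LieRing L] [LieAlgebra ℝ L]

/-!
If `z` is central, vanishing of the Nijenhuis tensor at `(z, y)` says that `ad (J z)` commutes
with `J`. Hence the range of `ad (J z)` is a complex subspace of `𝔫'`; it is nonzero when `J z` is
not central, and then has real dimension at least two. If it contained `z`, it would also contain
`J z`, say `J z = ⁅J z, y⁆`, which contradicts nilpotency of `ad y`. So if moreover `z ∈ 𝔫'`, then
`z` contributes a third dimension to `𝔫'`.
-/

section General

lemma linearIndependent_pair_of_map_map_eq_neg {K V : Type*} [Field K] [LinearOrder K]
    [IsStrictOrderedRing K] [AddCommGroup V] [Module K V] {J : V →ₗ[K] V}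
    (hJ : ∀ v, J (J v) = -v) {w : V} (hw : w ≠ 0) : LinearIndependent K ![w, J w] := by
  have hJw : J w ≠ 0 := fun h => hw (neg_eq_zero.mp (by rw [← hJ, h, map_zero]))
  refine linearIndependent_fin2.mpr ⟨hJw, fun a (ha : a • J w = w) => hw ?_⟩
  have hJw_eq : J w = -(a • w) := by
    rw [← smul_neg, ← hJ, ← map_smul, ha]
  have hsmul : (1 + a * a) • w = 0 := by
    rw [add_smul, one_smul, mul_smul, ← neg_neg (a • w), ← hJw_eq, smul_neg, ha, add_neg_cancel]
  exact (smul_eq_zero.mp hsmul).resolve_left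
    (add_pos_of_pos_of_nonneg one_pos (mul_self_nonneg a)).ne'

lemma eq_zero_of_lie_eq_self {𝔤 M : Type*} [LieRing 𝔤] [AddCommGroup M] [LieRingModule 𝔤 M]
    [LieModule.IsNilpotent 𝔤 M] {y : 𝔤} {m : M} (h : ⁅y, m⁆ = m) : m = 0 := by
  obtain ⟨k, hk⟩ := LieModule.isNilpotent_toEnd_of_isNilpotent ℤ 𝔤 M y
  have hfix : (LieModule.toEnd ℤ 𝔤 M y ^ k) m = m := by
    rw [Module.End.pow_apply]
    exact Function.IsFixedPt.iterate h k
  rw [← hfix, hk, LinearMap.zero_apply]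

variable {R 𝔤 : Type*} [CommRing R] [LieRing 𝔤] [LieAlgebra R 𝔤]

lemma notMem_range_ad_self [LieRing.IsNilpotent 𝔤] {x : 𝔤} (hx : x ≠ 0) :
    x ∉ (LieAlgebra.ad R 𝔤 x).range := by
  rintro ⟨y, hy : ⁅x, y⁆ = x⟩
  exact hx (eq_zero_of_lie_eq_self (y := -y) (by rw [neg_lie, lie_skew, hy]))

lemma isNilpotent_of_lie_top_top_le_center
    (h : ⁅(⊤ : LieIdeal R 𝔤), (⊤ : LieIdeal R 𝔤)⁆ ≤ LieAlgebra.center R 𝔤) :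
    LieRing.IsNilpotent 𝔤 :=
  .mk (R := R) 𝔤 (k := 2)
    ((LieModule.le_max_triv_iff_bracket_eq_bot R 𝔤 𝔤).mp h)

end General

lemma lie_mem_commutatorIdeal (x y : L) : ⁅x, y⁆ ∈ commutatorIdeal L :=
  LieSubmodule.lie_mem_lie (LieSubmodule.mem_top x) (LieSubmodule.mem_top y)

namespace IsComplexStructure

variable {J : L →ₗ[ℝ] L} {z : L}

lemma map_lie_map_of_mem_center (hJ : IsComplexStructure J) (hz : z ∈ LieAlgebra.center ℝ L)
    (y : L) : J ⁅J z, y⁆ = ⁅J z, J y⁆ := by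
  have hz_lie (x : L) : ⁅z, x⁆ = 0 := by rw [← lie_skew, hz x, neg_zero]
  simpa only [hz_lie, zero_add, add_zero, sub_eq_zero] using hJ.2 z y

lemma notMem_range_ad_map [LieRing.IsNilpotent L] (hJ : IsComplexStructure J)
    (hz : z ∈ LieAlgebra.center ℝ L) (hJz : J z ≠ 0) : z ∉ (LieAlgebra.ad ℝ L (J z)).range := by
  rintro ⟨y, hy : ⁅J z, y⁆ = z⟩
  refine notMem_range_ad_self (R := ℝ) hJz ⟨J y, ?_⟩
  rw [LieAlgebra.ad_apply, ← hJ.map_lie_map_of_mem_center hz, hy]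

lemma linearIndependent_lie_map [LieRing.IsNilpotent L] (hJ : IsComplexStructure J)
    (hz : z ∈ LieAlgebra.center ℝ L) {y : L} (hy : ⁅J z, y⁆ ≠ 0) :
    LinearIndependent ℝ ![z, ⁅J z, y⁆, ⁅J z, J y⁆] := by
  have hJz : J z ≠ 0 := fun h => hy (by rw [h, zero_lie])
  have hpair : LinearIndependent ℝ ![⁅J z, y⁆, ⁅J z, J y⁆] := by
    rw [← hJ.map_lie_map_of_mem_center hz]
    exact linearIndependent_pair_of_map_map_eq_neg hJ.1 hy
  have hspan : Submodule.span ℝ (Set.range ![⁅J z, y⁆, ⁅J z, J y⁆]) ≤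
      (LieAlgebra.ad ℝ L (J z)).range := by
    rw [Matrix.range_cons_cons_empty, Submodule.span_le, Set.pair_subset_iff]
    exact ⟨⟨y, rfl⟩, ⟨J y, rfl⟩⟩
  exact linearIndependent_finCons.mpr ⟨hpair, fun h => hJ.notMem_range_ad_map hz hJz (hspan h)⟩

end IsComplexStructure

theorem finrank_commutator_ge_three_of_three_step_general [LieRing.IsNilpotent L]
    (J : L →ₗ[ℝ] L) (hJ : IsComplexStructure J)
    (hJ3 : ¬ Submodule.map J (commutatorIdeal L ⊓ LieAlgebra.center ℝ L : LieIdeal ℝ L) ≤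
      (LieAlgebra.center ℝ L : Submodule ℝ L)) :
    3 ≤ Module.rank ℝ (commutatorIdeal L : Submodule ℝ L) := by
  obtain ⟨_, ⟨z, ⟨hz_comm, hz_center⟩, rfl⟩, hJz⟩ := SetLike.not_le_iff_exists.mp hJ3
  obtain ⟨y, hy⟩ : ∃ y : L, ⁅J z, y⁆ ≠ 0 := by
    by_contra! h
    exact hJz fun y => by rw [← lie_skew, h, neg_zero]
  have hli := hJ.linearIndependent_lie_map hz_center hy
  have hmem : ∀ i, ![z, ⁅J z, y⁆, ⁅J z, J y⁆] i ∈ commutatorIdeal L :=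
    Fin.forall_fin_succ.mpr ⟨hz_comm, Fin.forall_fin_two.mpr
      ⟨lie_mem_commutatorIdeal _ _, lie_mem_commutatorIdeal _ _⟩⟩
  have hli_comm : LinearIndependent ℝ
      fun i => (⟨_, hmem i⟩ : (commutatorIdeal L : Submodule ℝ L)) :=
    .of_comp (commutatorIdeal L : Submodule ℝ L).subtype hli
  simpa using hli_comm.cardinal_lift_le_rank

/-- a 2-step nilpotent Lie algebra admitting a 3-step complex structure
has `dim 𝔫' ≥ 3`. -/
theorem finrank_commutator_ge_three_of_three_step
    [FiniteDimensional ℝ L]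
    (h2 : commutatorIdeal L ≤ LieAlgebra.center ℝ L)
    (hna : commutatorIdeal L ≠ ⊥)
    (J : L →ₗ[ℝ] L) (hJ : IsComplexStructure J)
    (hJ3 : ¬ Submodule.map J (commutatorIdeal L : Submodule ℝ L) ≤
      (LieAlgebra.center ℝ L : Submodule ℝ L)) :
    3 ≤ Module.finrank ℝ (commutatorIdeal L : Submodule ℝ L) := by
  have := isNilpotent_of_lie_top_top_le_center h2
  have hrank := finrank_commutator_ge_three_of_three_step_general J hJ (by rwa [inf_eq_left.mpr h2])
  exact_mod_cast Module.finrank_eq_rank ℝ (commutatorIdeal L : Submodule ℝ L) ▸ hrank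
end
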